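/- Server security lemma: let q be a prime power and 1 ≤ B ≤ K. Let W_1,…,W_K be i.i.d. uniform on 𝔽_q^B, let f_1,…,f_K : (𝔽_q^B)^K → 𝔽_q be functions, and let (Z_1^Y,…,Z_K^Y) be 𝔽_q-valued random variables independent of (W_1,…,W_K) with H(Z_1^Y,…,Z_K^Y) ≥ K − B, entropies measured in q-ary units. Define Y_i = f_i(W_1,…,W_K) + Z_i^Y for i ∈ {1,…,K}. If H(W_1 + ⋯ + W_K | Y_1,…,Y_K) = 0 (the sum taken coordinatewise in 𝔽_q^B), then I(Y_1,…,Y_K ; W_1,…,W_K | W_1 + ⋯ + W_K) = 0. -/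

import Mathlib

/-!
The argument is the usual entropy count. Write `S = ∑ W_k`, `q = |F|`. Since `S` is a function of
`W`, and `(Y, W)` and `(Z, W)` determine each other, independence gives
`I(Y; W | S) = H(Y, S) + H(W) - H(S) - H(Z) - H(W) = H(Y, S) - H(S) - H(Z)`.
Recoverability gives `H(Y, S) = H(Y) ≤ K`, uniformity of `W` gives `H(S) = B`
(`ent_sum_of_uniform`), and `H(Z) ≥ K - B` by hypothesis, so the conditional mutual information is
at most `0`. It is nonnegative by submodularity of entropy (`condMutInfo_nonneg`).

Entropies are handled as expectations over the sample space (`ent_eq`): at a sample point of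
positive mass every probability under the logarithm is positive. Both the bound
`H(X) ≤ log_q |α|` and submodularity are instances of the single inequality
`sum_mul_logb_nonpos`, a form of Gibbs' inequality.
-/

open scoped BigOperators

noncomputable def pr {Ω : Type} [Fintype Ω] {α : Type} [DecidableEq α]
    (p : Ω → ℝ) (X : Ω → α) (a : α) : ℝ :=
  ∑ ω, if X ω = a then p ω else 0

noncomputable def ent {Ω : Type} [Fintype Ω] {α : Type} [Fintype α] [DecidableEq α]
    (q : ℕ) (p : Ω → ℝ) (X : Ω → α) : ℝ :=
  -∑ a, pr p X a * Real.logb q (pr p X a)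

noncomputable def condEnt {Ω : Type} [Fintype Ω] {α β : Type}
    [Fintype α] [DecidableEq α] [Fintype β] [DecidableEq β]
    (q : ℕ) (p : Ω → ℝ) (X : Ω → α) (Y : Ω → β) : ℝ :=
  ent q p (fun ω => (X ω, Y ω)) - ent q p Y

noncomputable def mutInfo {Ω : Type} [Fintype Ω] {α β : Type}
    [Fintype α] [DecidableEq α] [Fintype β] [DecidableEq β]
    (q : ℕ) (p : Ω → ℝ) (X : Ω → α) (Y : Ω → β) : ℝ :=
  ent q p X + ent q p Y - ent q p (fun ω => (X ω, Y ω))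

noncomputable def condMutInfo {Ω : Type} [Fintype Ω] {α β γ : Type}
    [Fintype α] [DecidableEq α] [Fintype β] [DecidableEq β] [Fintype γ] [DecidableEq γ]
    (q : ℕ) (p : Ω → ℝ) (X : Ω → α) (Y : Ω → β) (Z : Ω → γ) : ℝ :=
  condEnt q p X Z + condEnt q p Y Z - condEnt q p (fun ω => (X ω, Y ω)) Z

def IsPMF {Ω : Type} [Fintype Ω] (p : Ω → ℝ) : Prop :=
  (∀ ω, 0 ≤ p ω) ∧ ∑ ω, p ω = 1

def IndepRV {Ω : Type} [Fintype Ω] {α β : Type} [DecidableEq α] [DecidableEq β]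
    (p : Ω → ℝ) (X : Ω → α) (Y : Ω → β) : Prop :=
  ∀ a b, pr p (fun ω => (X ω, Y ω)) (a, b) = pr p X a * pr p Y b

/-- The set of `B` relays `{k, k+1, …, k+B−1}` (indices mod `K`) associated with user `k`. -/
def Bset (K B : ℕ) (k : Fin K) : Finset (Fin K) :=
  (Finset.range B).image fun j => ⟨((k : ℕ) + j) % K, Nat.mod_lt _ k.pos⟩

/-- The set of users associated with relay `i`. -/
def Uset (K B : ℕ) (i : Fin K) : Finset (Fin K) :=
  Finset.univ.filter fun k => i ∈ Bset K B k

section Entropy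

variable {Ω : Type} [Fintype Ω] {p : Ω → ℝ}

lemma sum_mul_comp {α : Type} [Fintype α] [DecidableEq α] (X : Ω → α) (g : α → ℝ) :
    ∑ ω, p ω * g (X ω) = ∑ a, pr p X a * g a := by
  simp only [pr, Finset.sum_mul]
  rw [Finset.sum_comm]
  simp [ite_mul]

/-- Entropy as the expectation of `-log_q P_X(X)`. -/
lemma ent_eq {α : Type} [Fintype α] [DecidableEq α] (q : ℕ) (X : Ω → α) :
    ent q p X = -∑ ω, p ω * Real.logb q (pr p X (X ω)) := by
  rw [ent, sum_mul_comp X fun a => Real.logb q (pr p X a)]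

lemma pr_nonneg (hp : IsPMF p) {α : Type} [DecidableEq α] (X : Ω → α) (a : α) :
    0 ≤ pr p X a :=
  Finset.sum_nonneg fun ω _ => by split_ifs <;> simp [hp.1 ω]

lemma pr_apply_pos (hp : IsPMF p) {α : Type} [DecidableEq α] (X : Ω → α) {ω : Ω}
    (hω : 0 < p ω) : 0 < pr p X (X ω) := by
  have h := Finset.single_le_sum (f := fun ω' => if X ω' = X ω then p ω' else 0)
    (fun i _ => by split_ifs <;> simp [hp.1 i]) (Finset.mem_univ ω)
  simp only [if_true] at h
  exact hω.trans_le h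

lemma sum_pr (hp : IsPMF p) {α : Type} [Fintype α] [DecidableEq α] (X : Ω → α) :
    ∑ a, pr p X a = 1 := by
  have h := sum_mul_comp (p := p) X fun _ => 1
  simpa [hp.2] using h.symm

lemma pr_comp {α β : Type} [Fintype α] [DecidableEq α] [DecidableEq β] (X : Ω → α) (g : α → β)
    (b : β) : pr p (fun ω => g (X ω)) b = ∑ a, if g a = b then pr p X a else 0 := by
  have h := sum_mul_comp (p := p) X fun a => if g a = b then 1 else 0
  simpa [pr] using h

lemma sum_pr_prod {α β : Type} [Fintype α] [DecidableEq α] [DecidableEq β]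
    (X : Ω → α) (Y : Ω → β) (b : β) :
    ∑ a, pr p (fun ω => (X ω, Y ω)) (a, b) = pr p Y b := by
  simp only [pr, Prod.mk.injEq]
  rw [Finset.sum_comm]
  refine Finset.sum_congr rfl fun ω _ => ?_
  by_cases h : Y ω = b <;> simp [h]

lemma ent_comp_of_injective {α β : Type} [Fintype α] [DecidableEq α] [Fintype β] [DecidableEq β]
    (q : ℕ) (X : Ω → α) {g : α → β} (hg : Function.Injective g) :
    ent q p (fun ω => g (X ω)) = ent q p X := by
  simp only [ent_eq, pr, hg.eq_iff]

/-- Gibbs' inequality, in the form "if `E[r] ≤ 1` then `E[log_q r] ≤ 0`". Positivity of `r` is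
needed only on the support of `p`. -/
lemma sum_mul_logb_nonpos (hp : IsPMF p) {q : ℕ} (hq : 1 < q) {r : Ω → ℝ}
    (hr : ∀ ω, 0 < p ω → 0 < r ω) (hsum : ∑ ω, p ω * r ω ≤ 1) :
    ∑ ω, p ω * Real.logb q (r ω) ≤ 0 := by
  have hlog : 0 < Real.log q := Real.log_pos (by exact_mod_cast hq)
  have key : ∑ ω, p ω * Real.log (r ω) ≤ 0 := by
    calc ∑ ω, p ω * Real.log (r ω) ≤ ∑ ω, (p ω * r ω - p ω) := by
          refine Finset.sum_le_sum fun ω _ => ?_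
          rcases (hp.1 ω).eq_or_lt with h | h
          · simp [← h]
          · nlinarith [Real.log_le_sub_one_of_pos (hr ω h)]
      _ ≤ 0 := by rw [Finset.sum_sub_distrib, hp.2]; linarith
  simp only [Real.logb, ← mul_div_assoc, ← Finset.sum_div]
  exact div_nonpos_of_nonpos_of_nonneg key hlog.le

lemma ent_le_logb_card (hp : IsPMF p) {q : ℕ} (hq : 1 < q) {α : Type} [Fintype α] [DecidableEq α]
    [Nonempty α] (X : Ω → α) : ent q p X ≤ Real.logb q (Fintype.card α) := by
  have hN : (0 : ℝ) < Fintype.card α := by exact_mod_cast Fintype.card_pos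
  -- compare the law of `X` with the uniform law
  have h := sum_mul_logb_nonpos hp hq (r := fun ω => (Fintype.card α * pr p X (X ω))⁻¹)
    (fun ω hω => inv_pos.2 (mul_pos hN (pr_apply_pos hp X hω))) (by
      rw [sum_mul_comp X fun a => (Fintype.card α * pr p X a)⁻¹]
      calc ∑ a, pr p X a * (Fintype.card α * pr p X a)⁻¹
          ≤ ∑ _a : α, (Fintype.card α : ℝ)⁻¹ := by
            refine Finset.sum_le_sum fun a _ => ?_
            rcases (pr_nonneg hp X a).eq_or_lt with h | h
            · rw [← h]; simp
            · apply le_of_eq; field_simp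
        _ = 1 := by simp [hN.ne'])
  have e : ∑ ω, p ω * Real.logb q ((Fintype.card α * pr p X (X ω))⁻¹)
      = ∑ ω, (-(p ω * Real.logb q (Fintype.card α)) - p ω * Real.logb q (pr p X (X ω))) := by
    refine Finset.sum_congr rfl fun ω _ => ?_
    rcases (hp.1 ω).eq_or_lt with h | h
    · simp [← h]
    · rw [Real.logb_inv, Real.logb_mul hN.ne' (pr_apply_pos hp X h).ne']; ring
  rw [e, Finset.sum_sub_distrib, Finset.sum_neg_distrib, ← Finset.sum_mul, hp.2] at h
  rw [ent_eq]
  linarith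

lemma ent_prod_of_indep (hp : IsPMF p) (q : ℕ) {α β : Type} [Fintype α] [DecidableEq α]
    [Fintype β] [DecidableEq β] {X : Ω → α} {Y : Ω → β} (h : IndepRV p X Y) :
    ent q p (fun ω => (X ω, Y ω)) = ent q p X + ent q p Y := by
  simp only [ent_eq]
  rw [← neg_add, ← Finset.sum_add_distrib]
  congr 1
  refine Finset.sum_congr rfl fun ω _ => ?_
  rcases (hp.1 ω).eq_or_lt with h0 | h0
  · simp [← h0]
  · rw [h, Real.logb_mul (pr_apply_pos hp X h0).ne' (pr_apply_pos hp Y h0).ne']; ring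

/-- Submodularity of entropy: Gibbs' inequality applied to the ratio
`P(x,z) P(y,z) / (P(x,y,z) P(z))`. -/
lemma condMutInfo_nonneg (hp : IsPMF p) {q : ℕ} (hq : 1 < q) {α β γ : Type}
    [Fintype α] [DecidableEq α] [Fintype β] [DecidableEq β] [Fintype γ] [DecidableEq γ]
    (X : Ω → α) (Y : Ω → β) (Z : Ω → γ) : 0 ≤ condMutInfo q p X Y Z := by
  set T : Ω → (α × β) × γ := fun ω => ((X ω, Y ω), Z ω) with hT
  set XZ : Ω → α × γ := fun ω => (X ω, Z ω) with hXZ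
  set YZ : Ω → β × γ := fun ω => (Y ω, Z ω) with hYZ
  let R : (α × β) × γ → ℝ := fun t =>
    pr p XZ (t.1.1, t.2) * pr p YZ (t.1.2, t.2) / (pr p T t * pr p Z t.2)
  have h := sum_mul_logb_nonpos hp hq (r := fun ω => R (T ω))
    (fun ω hω => div_pos (mul_pos (pr_apply_pos hp XZ hω) (pr_apply_pos hp YZ hω))
      (mul_pos (pr_apply_pos hp T hω) (pr_apply_pos hp Z hω))) (by
      rw [sum_mul_comp T R]
      calc ∑ t, pr p T t * R t
          ≤ ∑ t : (α × β) × γ, pr p XZ (t.1.1, t.2) * pr p YZ (t.1.2, t.2) / pr p Z t.2 := by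
            refine Finset.sum_le_sum fun t _ => ?_
            rcases (pr_nonneg hp T t).eq_or_lt with h | h
            · rw [← h, zero_mul]
              exact div_nonneg (mul_nonneg (pr_nonneg hp _ _) (pr_nonneg hp _ _))
                (pr_nonneg hp _ _)
            · apply le_of_eq
              simp only [R]
              rw [← mul_div_assoc, mul_div_mul_left _ _ h.ne']
        _ = ∑ c, pr p Z c := by
            rw [Fintype.sum_prod_type_right]
            refine Finset.sum_congr rfl fun c _ => ?_
            dsimp only
            rw [← Finset.sum_div, Fintype.sum_prod_type]
            simp only [← Finset.sum_mul_sum]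
            rw [hXZ, hYZ, sum_pr_prod, sum_pr_prod, mul_self_div_self]
        _ ≤ 1 := (sum_pr hp Z).le)
  have e : ∑ ω, p ω * Real.logb q (R (T ω))
      = ∑ ω, (p ω * Real.logb q (pr p XZ (XZ ω)) + p ω * Real.logb q (pr p YZ (YZ ω))
        - p ω * Real.logb q (pr p T (T ω)) - p ω * Real.logb q (pr p Z (Z ω))) := by
    refine Finset.sum_congr rfl fun ω _ => ?_
    rcases (hp.1 ω).eq_or_lt with h0 | h0
    · simp [← h0]
    · have h1 := (pr_apply_pos hp XZ h0).ne'
      have h2 := (pr_apply_pos hp YZ h0).ne'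
      have h3 := (pr_apply_pos hp T h0).ne'
      have h4 := (pr_apply_pos hp Z h0).ne'
      change p ω * Real.logb q (pr p XZ (XZ ω) * pr p YZ (YZ ω) /
        (pr p T (T ω) * pr p Z (Z ω))) = _
      rw [Real.logb_div (mul_ne_zero h1 h2) (mul_ne_zero h3 h4), Real.logb_mul h1 h2,
        Real.logb_mul h3 h4]
      ring
  rw [e, Finset.sum_sub_distrib, Finset.sum_sub_distrib, Finset.sum_add_distrib] at h
  simp only [condMutInfo, condEnt]
  rw [ent_eq q T, ent_eq q XZ, ent_eq q YZ, ent_eq q Z]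
  linarith

/-- If all `V`-valued inputs are jointly uniform, their sum is uniform on `V`: shifting one input
permutes the input tuples and translates the sum, so all values of the sum are equally likely. -/
lemma ent_sum_of_uniform (hp : IsPMF p) (q : ℕ) {K : ℕ} (hK : 0 < K) {V : Type} [AddCommGroup V]
    [Fintype V] [DecidableEq V] (W : Ω → Fin K → V) {c : ℝ} (hW : ∀ w, pr p W w = c) :
    ent q p (fun ω => ∑ k, W ω k) = Real.logb q (Fintype.card V) := by
  have hconst : ∀ s, pr p (fun ω => ∑ k, W ω k) s = pr p (fun ω => ∑ k, W ω k) 0 := by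
    intro s
    rw [pr_comp W (fun w => ∑ k, w k), pr_comp W (fun w => ∑ k, w k)]
    refine (Fintype.sum_equiv (Equiv.addRight (Pi.single (⟨0, hK⟩ : Fin K) s)) _ _ ?_).symm
    intro w
    simp [hW, Finset.sum_add_distrib]
  have hsum := sum_pr hp (fun ω => ∑ k, W ω k)
  simp only [hconst, Finset.sum_const, Finset.card_univ, nsmul_eq_mul] at hsum
  rw [ent]
  simp only [hconst, Finset.sum_const, Finset.card_univ, nsmul_eq_mul]
  rw [← mul_assoc, hsum, one_mul, ← Real.logb_inv, inv_eq_of_mul_eq_one_left hsum]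

end Entropy

/-- server security of the proposed scheme: with `W_1, …, W_K` i.i.d.
uniform on `𝔽_q^B`, messages `Y_i = f_i(W_1,…,W_K) + Z_i^Y` where the key symbols
`(Z_1^Y, …, Z_K^Y)` are independent of the inputs and jointly carry at least `K − B` q-ary
units of entropy, if the input sum is recoverable from `Y_1, …, Y_K` then
`I(Y_1,…,Y_K ; W_1,…,W_K | W_1 + ⋯ + W_K) = 0`. -/
theorem scheme_server_security
    {K B : ℕ} (hB1 : 1 ≤ B) (hBK : B ≤ K)
    {F : Type} [Field F] [Fintype F] [DecidableEq F]
    {Ω : Type} [Fintype Ω] (p : Ω → ℝ) (hp : IsPMF p)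
    (W : Fin K → Ω → (Fin B → F))
    (f : Fin K → (Fin K → Fin B → F) → F)
    (ZY : Fin K → Ω → F)
    (Y : Fin K → Ω → F)
    -- the inputs are i.i.d. uniform on 𝔽_q^B
    (hW : ∀ w : Fin K → Fin B → F,
      pr p (fun ω => fun k => W k ω) w = 1 / (Fintype.card F : ℝ) ^ (K * B))
    -- the key symbols are independent of the inputs
    (hZW : IndepRV p (fun ω => fun i => ZY i ω) (fun ω => fun k => W k ω))
    -- the key symbols jointly carry at least K − B q-ary units of entropy
    (hZent : (K : ℝ) - (B : ℝ) ≤ ent (Fintype.card F) p (fun ω => fun i => ZY i ω))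
    -- each message is a function of the inputs plus a key symbol
    (hYdef : ∀ i : Fin K, ∀ ω, Y i ω = f i (fun k => W k ω) + ZY i ω)
    -- the input sum is recoverable from the messages
    (hRec : condEnt (Fintype.card F) p
      (fun ω => ∑ k, W k ω) (fun ω => fun i => Y i ω) = 0) :
    condMutInfo (Fintype.card F) p
      (fun ω => fun i => Y i ω) (fun ω => fun k => W k ω) (fun ω => ∑ k, W k ω) = 0 := by
  have hq : 1 < Fintype.card F := Fintype.one_lt_card
  have hcard : ∀ n : ℕ, Real.logb (Fintype.card F) (Fintype.card (Fin n → F)) = n := by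
    intro n
    rw [Fintype.card_fun, Fintype.card_fin, Nat.cast_pow, Real.logb_pow,
      Real.logb_self_eq_one (by exact_mod_cast hq), mul_one]
  refine le_antisymm ?_ (condMutInfo_nonneg hp hq _ _ _)
  have hS : ent (Fintype.card F) p (fun ω => ∑ k, W k ω) = B :=
    (ent_sum_of_uniform hp _ (hB1.trans hBK) (fun ω k => W k ω) hW).trans (hcard B)
  have hY := (ent_le_logb_card hp hq (fun ω => fun i => Y i ω)).trans_eq (hcard K)
  have hWS : ent (Fintype.card F) p (fun ω => (fun k => W k ω, ∑ k, W k ω))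
      = ent (Fintype.card F) p (fun ω => fun k => W k ω) :=
    ent_comp_of_injective _ (fun ω => fun k => W k ω) (g := fun w => (w, ∑ k, w k))
      fun a b h => congrArg Prod.fst h
  have hYS : ent (Fintype.card F) p (fun ω => (fun i => Y i ω, ∑ k, W k ω))
      = ent (Fintype.card F) p (fun ω => (∑ k, W k ω, fun i => Y i ω)) :=
    ent_comp_of_injective _ (fun ω => (∑ k, W k ω, fun i => Y i ω))
      (g := fun x => (x.2, x.1)) fun a b h => Prod.swap_injective h
  -- `(Y, W, S)` is an injective image of `(Z, W)`
  have hYWS : ent (Fintype.card F) p (fun ω => ((fun i => Y i ω, fun k => W k ω), ∑ k, W k ω))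
      = ent (Fintype.card F) p (fun ω => (fun i => ZY i ω, fun k => W k ω)) := by
    simp only [hYdef]
    refine ent_comp_of_injective _ (fun ω => (fun i => ZY i ω, fun k => W k ω))
      (g := fun x => ((fun i => f i x.2 + x.1 i, x.2), ∑ k, x.2 k)) ?_
    rintro ⟨z, w⟩ ⟨z', w'⟩ h
    simp only [Prod.mk.injEq] at h
    obtain ⟨⟨h1, rfl⟩, -⟩ := h
    exact Prod.ext (funext fun i => add_left_cancel (congrFun h1 i)) rfl
  rw [ent_prod_of_indep hp _ hZW] at hYWS
  simp only [condEnt] at hRec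
  simp only [condMutInfo, condEnt]
  linarith
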